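/- Let n ≥ 3 and let X ⊂ ℂⁿ be an algebraic curve. Then there exist a real number r > 0 and a surjective linear map π : ℂⁿ → ℂⁿ⁻¹ such that the restriction of π to X is a proper map, and there exists C ≥ 1 such that C⁻¹·‖x − y‖ ≤ ‖π(x) − π(y)‖ ≤ C·‖x − y‖ for all x, y ∈ X \ π⁻¹(B(0,r)); moreover π maps X \ π⁻¹(B(0,r)) into ℂⁿ⁻¹ \ B(0,r). -/

import Mathlib

open Set Metric

noncomputable section

/-- An algebraic set in ℂᵏ: the common zero set of a finite family of polynomials. -/
def IsAlgebraicSet {k : ℕ} (X : Set (EuclideanSpace ℂ (Fin k))) : Prop :=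
  ∃ S : Finset (MvPolynomial (Fin k) ℂ),
    X = {x | ∀ p ∈ S, MvPolynomial.eval (fun i => x i) p = 0}

/-- An irreducible algebraic curve: an infinite algebraic set all of whose proper algebraic
subsets are finite. -/
def IsIrreducibleAlgebraicCurve {k : ℕ} (X : Set (EuclideanSpace ℂ (Fin k))) : Prop :=
  IsAlgebraicSet X ∧ X.Infinite ∧ ∀ Y, IsAlgebraicSet Y → Y ⊂ X → Y.Finite

/-- An algebraic curve: a finite union of irreducible algebraic curves. -/
def IsAlgebraicCurve {k : ℕ} (X : Set (EuclideanSpace ℂ (Fin k))) : Prop :=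
  ∃ F : Finset (Set (EuclideanSpace ℂ (Fin k))),
    (∀ C ∈ F, IsIrreducibleAlgebraicCurve C) ∧ X = ⋃ C ∈ F, C

/-- `f` maps `X` bijectively onto `Y` and is bi-Lipschitz (outer metric). -/
def IsBiLipschitzOn {E F : Type*} [NormedAddCommGroup E] [NormedAddCommGroup F]
    (f : E → F) (X : Set E) (Y : Set F) : Prop :=
  Set.BijOn f X Y ∧ ∃ C : ℝ, 1 ≤ C ∧ ∀ x ∈ X, ∀ x' ∈ X,
    C⁻¹ * ‖x - x'‖ ≤ ‖f x - f x'‖ ∧ ‖f x - f x'‖ ≤ C * ‖x - x'‖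

/-- `X` and `Y` are bi-Lipschitz equivalent (with respect to the outer Euclidean metric). -/
def BiLipschitzEquiv {E F : Type*} [NormedAddCommGroup E] [NormedAddCommGroup F]
    (X : Set E) (Y : Set F) : Prop :=
  ∃ f : E → F, IsBiLipschitzOn f X Y

/-- `X` and `Y` are bi-Lipschitz equivalent at infinity. -/
def BiLipschitzEquivAtInfinity {E F : Type*} [NormedAddCommGroup E] [NormedAddCommGroup F]
    (X : Set E) (Y : Set F) : Prop :=
  ∃ (K₁ : Set E) (K₂ : Set F), IsCompact K₁ ∧ IsCompact K₂ ∧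
    BiLipschitzEquiv (X \ K₁) (Y \ K₂)

/-- The germs `(X, p)` and `(Y, q)` are bi-Lipschitz equivalent. -/
def GermBiLipschitzEquiv {E F : Type*} [NormedAddCommGroup E] [NormedAddCommGroup F]
    (X : Set E) (p : E) (Y : Set F) (q : F) : Prop :=
  ∃ (U : Set E) (V : Set F), IsOpen U ∧ IsOpen V ∧ p ∈ U ∧ q ∈ V ∧
    ∃ f : E → F, IsBiLipschitzOn f (X ∩ U) (Y ∩ V) ∧ f p = q

/-- `γ` maps `D` homeomorphically onto `S`. -/
def MapsHomeomorphicallyOnto {E : Type*} [TopologicalSpace E]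
    (γ : ℂ → E) (D : Set ℂ) (S : Set E) : Prop :=
  Set.InjOn γ D ∧ γ '' D = S ∧ ContinuousOn γ D ∧
    ∃ σ : E → ℂ, ContinuousOn σ S ∧ ∀ z ∈ D, σ (γ z) = z

/-- A regular point of a curve `X ⊂ ℂᵏ`: some neighborhood of `p` in `X` is the
homeomorphic image of an injective holomorphic map with nowhere-vanishing derivative. -/
def IsRegularPoint {k : ℕ} (X : Set (EuclideanSpace ℂ (Fin k)))
    (p : EuclideanSpace ℂ (Fin k)) : Prop :=
  ∃ (U : Set (EuclideanSpace ℂ (Fin k))) (D : Set ℂ) (γ : ℂ → EuclideanSpace ℂ (Fin k)),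
    IsOpen U ∧ p ∈ U ∧ IsOpen D ∧ DifferentiableOn ℂ γ D ∧ Set.InjOn γ D ∧
    (∀ z ∈ D, deriv γ z ≠ 0) ∧ MapsHomeomorphicallyOnto γ D (X ∩ U)

/-- The set of singular points of `X`. -/
def SingularSet {k : ℕ} (X : Set (EuclideanSpace ℂ (Fin k))) :
    Set (EuclideanSpace ℂ (Fin k)) :=
  {p ∈ X | ¬ IsRegularPoint X p}

/-- `B` is a (smooth) branch through `q` with tangent vector `v`. -/
def IsBranchAt (B : Set (EuclideanSpace ℂ (Fin 2))) (q v : EuclideanSpace ℂ (Fin 2)) : Prop :=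
  ∃ (D : Set ℂ) (γ : ℂ → EuclideanSpace ℂ (Fin 2)) (z₀ : ℂ),
    IsOpen D ∧ z₀ ∈ D ∧ DifferentiableOn ℂ γ D ∧ Set.InjOn γ D ∧
    (∀ z ∈ D, deriv γ z ≠ 0) ∧ MapsHomeomorphicallyOnto γ D B ∧
    γ z₀ = q ∧ deriv γ z₀ = v

/-- `q` is a node of the plane curve `Y`: near `q`, `Y` is the union of two smooth branches
meeting only at `q` with distinct tangent lines. -/
def IsNode (Y : Set (EuclideanSpace ℂ (Fin 2))) (q : EuclideanSpace ℂ (Fin 2)) : Prop :=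
  q ∈ Y ∧ ∃ (U B₁ B₂ : Set (EuclideanSpace ℂ (Fin 2))) (v₁ v₂ : EuclideanSpace ℂ (Fin 2)),
    IsOpen U ∧ q ∈ U ∧ Y ∩ U = B₁ ∪ B₂ ∧ B₁ ∩ B₂ = {q} ∧
    IsBranchAt B₁ q v₁ ∧ IsBranchAt B₂ q v₂ ∧ ∀ c : ℂ, v₂ ≠ c • v₁

/-- The set of points of `ℂ²` having more than one `π`-preimage in `X`. -/
def MultipleSet {n : ℕ} (π : EuclideanSpace ℂ (Fin n) →ₗ[ℂ] EuclideanSpace ℂ (Fin 2))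
    (X : Set (EuclideanSpace ℂ (Fin n))) : Set (EuclideanSpace ℂ (Fin 2)) :=
  {q | ∃ x ∈ X, ∃ y ∈ X, x ≠ y ∧ π x = q ∧ π y = q}

/-- `π` is a generic plane projection for the algebraic curve `X ⊂ ℂⁿ`. -/
def IsGenericPlaneProjection {n : ℕ}
    (π : EuclideanSpace ℂ (Fin n) →ₗ[ℂ] EuclideanSpace ℂ (Fin 2))
    (X : Set (EuclideanSpace ℂ (Fin n))) : Prop :=
  Function.Surjective π ∧
  (∀ K : Set (EuclideanSpace ℂ (Fin 2)), IsCompact K → IsCompact (X ∩ ⇑π ⁻¹' K)) ∧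
  (MultipleSet π X).Finite ∧
  (∀ q ∈ MultipleSet π X, ∃ x y, x ≠ y ∧ {z ∈ X | π z = q} = {x, y} ∧
    IsRegularPoint X x ∧ IsRegularPoint X y) ∧
  (∀ q ∈ MultipleSet π X, IsNode (⇑π '' X) q) ∧
  (∀ p ∈ X, π p ∉ MultipleSet π X →
    ∃ (U : Set (EuclideanSpace ℂ (Fin n))) (V : Set (EuclideanSpace ℂ (Fin 2))),
      IsOpen U ∧ IsOpen V ∧ p ∈ U ∧ π p ∈ V ∧
      IsBiLipschitzOn (⇑π) (X ∩ U) ((⇑π '' X) ∩ V))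

/-- The complex projective plane `ℂP²`. -/
abbrev ProjPlane : Type := Projectivization ℂ (Fin 3 → ℂ)

instance : TopologicalSpace ProjPlane :=
  inferInstanceAs (TopologicalSpace (Quotient (projectivizationSetoid ℂ (Fin 3 → ℂ))))

/-- The embedding `ℂ² → ℂP²`, `(x, y) ↦ (x : y : 1)`. -/
def toProj (p : EuclideanSpace ℂ (Fin 2)) : ProjPlane :=
  Projectivization.mk ℂ ![p 0, p 1, 1] (fun h => by simpa using congrFun h 2)

/-- The line at infinity in `ℂP²`. -/
def lineAtInfinity : Set ProjPlane := {P | P.rep 2 = 0}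

/-- The projective closure of a plane curve `X ⊂ ℂ²`: the topological closure in `ℂP²`. -/
def projClosure (X : Set (EuclideanSpace ℂ (Fin 2))) : Set ProjPlane :=
  closure (toProj '' X)

/-- The germs `(A, p)` and `(B, q)` are (ambient) topologically equivalent. -/
def GermTopEquiv {T : Type*} [TopologicalSpace T] (A : Set T) (p : T) (B : Set T) (q : T) :
    Prop :=
  ∃ (U V : Set T) (φ ψ : T → T),
    IsOpen U ∧ IsOpen V ∧ p ∈ U ∧ q ∈ V ∧
    ContinuousOn φ U ∧ ContinuousOn ψ V ∧ Set.MapsTo φ U V ∧ Set.MapsTo ψ V U ∧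
    (∀ x ∈ U, ψ (φ x) = x) ∧ (∀ y ∈ V, φ (ψ y) = y) ∧
    φ p = q ∧ φ '' (A ∩ U) = B ∩ V

/-- The `i`-th standard affine chart of `ℂP²`. -/
def chart (i : Fin 3) (P : ProjPlane) : EuclideanSpace ℂ (Fin 2) :=
  (EuclideanSpace.equiv (Fin 2) ℂ).symm fun j => P.rep (i.succAbove j) / P.rep i

/-- A regular point of a curve `C ⊂ ℂP²`: read in a standard affine chart, some neighborhood
of `p` in `C` is the homeomorphic image of an injective holomorphic map with
nowhere-vanishing derivative. -/
def IsRegularPointProj (C : Set ProjPlane) (p : ProjPlane) : Prop :=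
  ∃ i : Fin 3, p.rep i ≠ 0 ∧
    ∃ W : Set ProjPlane, IsOpen W ∧ p ∈ W ∧ W ⊆ {P : ProjPlane | P.rep i ≠ 0} ∧
      ∃ (D : Set ℂ) (γ : ℂ → EuclideanSpace ℂ (Fin 2)),
        IsOpen D ∧ DifferentiableOn ℂ γ D ∧ Set.InjOn γ D ∧ (∀ z ∈ D, deriv γ z ≠ 0) ∧
        MapsHomeomorphicallyOnto γ D (chart i '' (C ∩ W))

/-- The set of singular points of a curve `C ⊂ ℂP²`. -/
def SingularSetProj (C : Set ProjPlane) : Set ProjPlane :=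
  {p ∈ C | ¬ IsRegularPointProj C p}

/-- `C` is an irreducible component of the algebraic curve `X`. -/
def IsIrreducibleComponent {k : ℕ} (C X : Set (EuclideanSpace ℂ (Fin k))) : Prop :=
  IsIrreducibleAlgebraicCurve C ∧ C ⊆ X ∧
    ∀ C', IsIrreducibleAlgebraicCurve C' → C' ⊆ X → C ⊆ C' → C' = C

/-- The degree of an algebraic plane curve: the minimal degree of a nonzero polynomial
vanishing identically on it. -/
def curveDegree (X : Set (EuclideanSpace ℂ (Fin 2))) : ℕ :=
  sInf {d | ∃ P : MvPolynomial (Fin 2) ℂ, P ≠ 0 ∧ P.totalDegree = d ∧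
    ∀ x ∈ X, MvPolynomial.eval (fun i => x i) P = 0}

/-!
The functions on an algebraic curve `X` given by polynomials of degree at most `N` form a space of
dimension `O(N)`, by Noether normalization, so on the space `X × X × ℂ` of triples `(x, y, t)` the
corresponding dimension is `O(N ^ 3)`. The `n + 1 > 3` functions `t (x_j - y_j)` and `1 / x_i` are
therefore algebraically dependent. Dividing a relation by the largest possible power of the variable
standing for `1 / x_i` and then setting this variable to `0` leaves a nonzero polynomial `R_i` on
`ℂⁿ`. A vector `v` with `R_i v ≠ 0` is isolated from the secant vectors `t (x - y)` of `X` as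
`|x_i| → ∞`. For `v` outside the zero sets of all `R_i`, a linear map with kernel `ℂ v` does not
contract the secants from points near infinity by more than a constant factor, which makes it proper
and bi-Lipschitz at infinity on `X`.
-/

open Module Submodule Filter Topology Bornology

/-! ### Polynomial growth of powers of a subspace -/

section Growth

variable {K A B : Type*} [Field K] [CommRing A] [Algebra K A] [CommRing B] [Algebra K B]

lemma fg_one_submodule : (1 : Submodule K A).FG := by
  rw [one_eq_span]
  exact fg_span_singleton 1

lemma finrank_mul_le {M N : Submodule K A} (hM : M.FG) (hN : N.FG) :
    finrank K ↥(M * N) ≤ finrank K M * finrank K N := by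
  have := Module.Finite.iff_fg.mpr hM
  have := Module.Finite.iff_fg.mpr hN
  rw [← mulMap_range, ← finrank_tensorProduct]
  exact LinearMap.finrank_range_le _

lemma finrank_le_of_le_of_fg {M N : Submodule K A} (hMN : M ≤ N) (hN : N.FG) :
    finrank K M ≤ finrank K N :=
  have := Module.Finite.iff_fg.mpr hN
  Submodule.finrank_mono hMN

/-- `V` is finite-dimensional and `dim (V ^ N) = O(N ^ d)`, in the sense of Gelfand and Kirillov.
The bound is written with `N + 1` so that it makes sense at `N = 0`. -/
def HasPolynomialGrowth (V : Submodule K A) (d : ℕ) : Prop :=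
  V.FG ∧ ∃ c, ∀ N, finrank K ↥(V ^ N) ≤ c * (N + 1) ^ d

namespace HasPolynomialGrowth

variable {V W : Submodule K A} {d e : ℕ}

lemma mono_exponent (hV : HasPolynomialGrowth V d) (hde : d ≤ e) : HasPolynomialGrowth V e := by
  obtain ⟨hfg, c, hc⟩ := hV
  exact ⟨hfg, c, fun N => (hc N).trans (by gcongr; omega)⟩

lemma mono (hW : HasPolynomialGrowth W d) (hVW : V ≤ W) : HasPolynomialGrowth V d := by
  obtain ⟨hfg, c, hc⟩ := hW
  refine ⟨hfg.of_le hVW, c, fun N => ?_⟩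
  exact (finrank_le_of_le_of_fg (pow_le_pow_left' hVW N) (hfg.pow N)).trans (hc N)

lemma map (hV : HasPolynomialGrowth V d) (f : A →ₐ[K] B) :
    HasPolynomialGrowth (V.map f.toLinearMap) d := by
  obtain ⟨hfg, c, hc⟩ := hV
  refine ⟨hfg.map _, c, fun N => ?_⟩
  have := Module.Finite.iff_fg.mpr (hfg.pow N)
  rw [← Submodule.map_pow]
  exact (finrank_map_le _ _).trans (hc N)

lemma one : HasPolynomialGrowth (1 : Submodule K A) 0 := by
  refine ⟨fg_one_submodule, 1, fun N => ?_⟩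
  rw [one_pow, one_eq_span]
  exact (finrank_span_le_card {(1 : A)}).trans (by simp)

lemma mul (hV : HasPolynomialGrowth V d) (hW : HasPolynomialGrowth W e) :
    HasPolynomialGrowth (V * W) (d + e) := by
  obtain ⟨hVfg, c, hc⟩ := hV
  obtain ⟨hWfg, c', hc'⟩ := hW
  refine ⟨hVfg.mul hWfg, c * c', fun N => ?_⟩
  calc finrank K ↥((V * W) ^ N) = finrank K ↥(V ^ N * W ^ N) := by rw [mul_pow]
    _ ≤ finrank K ↥(V ^ N) * finrank K ↥(W ^ N) := finrank_mul_le (hVfg.pow N) (hWfg.pow N)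
    _ ≤ c * (N + 1) ^ d * (c' * (N + 1) ^ e) := Nat.mul_le_mul (hc N) (hc' N)
    _ = c * c' * (N + 1) ^ (d + e) := by ring

lemma prod {ι : Type*} (s : Finset ι) {V : ι → Submodule K A} {d : ι → ℕ}
    (hV : ∀ i ∈ s, HasPolynomialGrowth (V i) (d i)) :
    HasPolynomialGrowth (∏ i ∈ s, V i) (∑ i ∈ s, d i) := by
  classical
  induction s using Finset.induction_on with
  | empty => simpa using one
  | insert i s hi ih =>
    rw [Finset.prod_insert hi, Finset.sum_insert hi]
    exact (hV i (s.mem_insert_self i)).mul (ih fun j hj => hV j (Finset.mem_insert_of_mem hj))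

lemma pow (hV : HasPolynomialGrowth V d) (k : ℕ) : HasPolynomialGrowth (V ^ k) d := by
  obtain ⟨hfg, c, hc⟩ := hV
  refine ⟨hfg.pow k, c * (k + 1) ^ d, fun N => ?_⟩
  calc finrank K ↥((V ^ k) ^ N) ≤ c * (k * N + 1) ^ d := by rw [← pow_mul]; exact hc _
    _ ≤ c * ((k + 1) * (N + 1)) ^ d := by gcongr; nlinarith
    _ = c * (k + 1) ^ d * (N + 1) ^ d := by rw [mul_pow, mul_assoc]

lemma of_map_map {C : Type*} [CommRing C] [Algebra K C] {f : A →ₐ[K] B} {g : A →ₐ[K] C}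
    (hfg : Function.Injective (f.prod g)) (hf : HasPolynomialGrowth (V.map f.toLinearMap) d)
    (hg : HasPolynomialGrowth (V.map g.toLinearMap) d) : HasPolynomialGrowth V d := by
  obtain ⟨hVf, c, hc⟩ := hf
  obtain ⟨hVg, c', hc'⟩ := hg
  have hmap (N : ℕ) : ∃ i : ↥(V ^ N) →ₗ[K]
      ↥(V.map f.toLinearMap ^ N) × ↥(V.map g.toLinearMap ^ N), Function.Injective i := by
    rw [← Submodule.map_pow, ← Submodule.map_pow]
    refine ⟨(f.toLinearMap.submoduleMap (V ^ N)).prod (g.toLinearMap.submoduleMap (V ^ N)),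
      fun x y hxy => Subtype.ext (hfg (Prod.ext ?_ ?_))⟩
    · exact congrArg (fun p => (p.1 : B)) hxy
    · exact congrArg (fun p => (p.2 : C)) hxy
  have hfin (N : ℕ) := Module.Finite.iff_fg.mpr (hVf.pow N)
  have hfin' (N : ℕ) := Module.Finite.iff_fg.mpr (hVg.pow N)
  refine ⟨?_, c + c', fun N => ?_⟩
  · obtain ⟨i, hi⟩ := hmap 1
    simpa only [pow_one, Module.Finite.iff_fg] using Module.Finite.of_injective i hi
  · obtain ⟨i, hi⟩ := hmap N
    calc finrank K ↥(V ^ N)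
        ≤ finrank K ↥(V.map f.toLinearMap ^ N) + finrank K ↥(V.map g.toLinearMap ^ N) := by
          simpa only [finrank_prod] using LinearMap.finrank_le_finrank_of_injective hi
      _ ≤ c * (N + 1) ^ d + c' * (N + 1) ^ d := Nat.add_le_add (hc N) (hc' N)
      _ = (c + c') * (N + 1) ^ d := by ring

lemma of_mul_le (hW : HasPolynomialGrowth W d) {M : Submodule K A} (hV : V.FG) (hM : M.FG)
    (hone : 1 ≤ M) (hVM : V * M ≤ W * M) : HasPolynomialGrowth V d := by
  obtain ⟨hWfg, c, hc⟩ := hW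
  have hpow (N : ℕ) : V ^ N * M ≤ W ^ N * M := by
    induction N with
    | zero => simp
    | succ N ih =>
      calc V ^ (N + 1) * M = V ^ N * (V * M) := by rw [pow_succ, mul_assoc]
        _ ≤ V ^ N * (W * M) := by gcongr
        _ = V ^ N * M * W := by rw [mul_left_comm, mul_comm]
        _ ≤ W ^ N * M * W := by gcongr
        _ = W ^ (N + 1) * M := by rw [mul_right_comm, pow_succ]
  refine ⟨hV, c * finrank K M, fun N => ?_⟩
  have hVN : V ^ N ≤ W ^ N * M :=
    calc V ^ N = V ^ N * 1 := (mul_one _).symm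
      _ ≤ V ^ N * M := by gcongr
      _ ≤ W ^ N * M := hpow N
  calc finrank K ↥(V ^ N) ≤ finrank K ↥(W ^ N * M) :=
      finrank_le_of_le_of_fg hVN ((hWfg.pow N).mul hM)
    _ ≤ finrank K ↥(W ^ N) * finrank K M := finrank_mul_le (hWfg.pow N) hM
    _ ≤ c * (N + 1) ^ d * finrank K M := by gcongr; exact hc N
    _ = c * finrank K M * (N + 1) ^ d := by ring

lemma one_sup_span_singleton (x : A) : HasPolynomialGrowth (1 ⊔ K ∙ x) 1 := by
  have hpow (N : ℕ) : (1 ⊔ K ∙ x) ^ N ≤ span K (range fun k : Fin (N + 1) => x ^ (k : ℕ)) := by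
    induction N with
    | zero => simp [one_eq_span]
    | succ N ih =>
      rw [pow_succ]
      refine (mul_le_mul_left ih _).trans ?_
      rw [Submodule.mul_sup, mul_one, span_mul_span, sup_le_iff, span_le, span_le]
      constructor
      · rintro _ ⟨k, rfl⟩
        exact subset_span ⟨k.castSucc, rfl⟩
      · rintro _ ⟨_, ⟨k, rfl⟩, _, rfl, rfl⟩
        exact subset_span ⟨k.succ, pow_succ _ k⟩
  refine ⟨fg_one_submodule.sup (fg_span_singleton x), 1, fun N => ?_⟩
  calc finrank K ↥((1 ⊔ K ∙ x) ^ N)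
      ≤ finrank K (span K (range fun k : Fin (N + 1) => x ^ (k : ℕ))) :=
        finrank_le_of_le_of_fg (hpow N) (fg_span (finite_range _))
    _ ≤ Fintype.card (Fin (N + 1)) := finrank_range_le_card _
    _ = 1 * (N + 1) ^ 1 := by simp

end HasPolynomialGrowth

section DegreeOne

variable {ι : Type*} (K)

/-- The space of values at `a` of polynomials of degree at most one; its `N`-th power is the space
of values of polynomials of degree at most `N`. -/
def degreeOneSpan (a : ι → A) : Submodule K A := 1 ⊔ span K (range a)

variable {K}

lemma one_le_degreeOneSpan (a : ι → A) : 1 ≤ degreeOneSpan K a := le_sup_left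

lemma mem_degreeOneSpan (a : ι → A) (i : ι) : a i ∈ degreeOneSpan K a :=
  le_sup_right (a := (1 : Submodule K A)) (subset_span (mem_range_self i))

lemma degreeOneSpan_le {a : ι → A} {V : Submodule K A} (hone : 1 ≤ V) (ha : ∀ i, a i ∈ V) :
    degreeOneSpan K a ≤ V :=
  sup_le hone (span_le.mpr (range_subset_iff.mpr ha))

lemma map_degreeOneSpan (f : A →ₐ[K] B) (a : ι → A) :
    (degreeOneSpan K a).map f.toLinearMap = degreeOneSpan K (f ∘ a) := by
  rw [degreeOneSpan, Submodule.map_sup, Submodule.map_one, map_span, ← range_comp]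
  rfl

lemma degreeOneSpan_fg [Finite ι] (a : ι → A) : (degreeOneSpan K a).FG :=
  fg_one_submodule.sup (fg_span (finite_range a))

lemma hasPolynomialGrowth_degreeOneSpan [Fintype ι] (a : ι → A) :
    HasPolynomialGrowth (degreeOneSpan K a) (Fintype.card ι) := by
  classical
  have hprod := HasPolynomialGrowth.prod Finset.univ
    fun i _ => HasPolynomialGrowth.one_sup_span_singleton (K := K) (a i)
  rw [Finset.sum_const, smul_eq_mul, mul_one, Finset.card_univ] at hprod
  have hone (i : ι) : (1 : Submodule K A) ≤ 1 ⊔ K ∙ a i := le_sup_left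
  refine hprod.mono (degreeOneSpan_le (Finset.one_le_prod' fun i _ => hone i) fun i => ?_)
  refine (Finset.single_le_prod' (fun j _ => hone j) (Finset.mem_univ i)) ?_
  exact le_sup_right (a := (1 : Submodule K A)) (mem_span_singleton_self _)

lemma exists_aeval_mem_degreeOneSpan_pow (a : ι → A) (p : MvPolynomial ι K) :
    ∃ k, MvPolynomial.aeval a p ∈ degreeOneSpan K a ^ k := by
  have hone := one_le_degreeOneSpan (K := K) a
  induction p using MvPolynomial.induction_on with
  | C r => exact ⟨0, by simp⟩
  | add p q hp hq =>
    obtain ⟨k, hk⟩ := hp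
    obtain ⟨l, hl⟩ := hq
    rw [map_add]
    exact ⟨k + l, add_mem (pow_le_pow_right' hone (k.le_add_right l) hk)
      (pow_le_pow_right' hone (l.le_add_left k) hl)⟩
  | mul_X p i hp =>
    obtain ⟨k, hk⟩ := hp
    rw [map_mul, MvPolynomial.aeval_X]
    exact ⟨k + 1, mul_mem_mul hk (mem_degreeOneSpan a i)⟩

end DegreeOne

lemma exists_le_of_fg_of_monotone {U : Submodule K A} (hU : U.FG)
    {S : ℕ → Submodule K A} (hS : Monotone S) (hUS : ∀ x ∈ U, ∃ k, x ∈ S k) : ∃ k, U ≤ S k := by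
  obtain ⟨s, rfl⟩ := hU
  choose! k hk using hUS
  exact ⟨s.sup k, span_le.mpr fun x hx => hS (Finset.le_sup hx) (hk x (subset_span hx))⟩

end Growth

section Finite

variable {K A σ : Type*} [Field K] [CommRing A] [Algebra K A] [Fintype σ]

-- Multiplication by `V` enlarges a finite module `M` over `K[σ]` by a bounded polynomial degree.
lemma hasPolynomialGrowth_of_finite {g : MvPolynomial σ K →ₐ[K] A} (hg : g.Finite)
    {V : Submodule K A} (hV : V.FG) : HasPolynomialGrowth V (Fintype.card σ) := by
  have hg_eq (p : MvPolynomial σ K) : g p = MvPolynomial.aeval (g ∘ MvPolynomial.X) p := by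
    rw [← MvPolynomial.aeval_unique g]
  set P := degreeOneSpan K (g ∘ MvPolynomial.X)
  have hP : Monotone (P ^ ·) := fun _ _ => pow_le_pow_right' (one_le_degreeOneSpan _)
  have hg' : g.toRingHom.Finite := hg
  algebraize [g.toRingHom]
  obtain ⟨s, hs⟩ := Module.Finite.fg_top (R := MvPolynomial σ K) (M := A)
  set M : Submodule K A := 1 ⊔ span K s
  have hM : M.FG := fg_one_submodule.sup (fg_span s.finite_toSet)
  have hgen (x : A) : ∃ k, x ∈ P ^ k * M := by
    have hx : x ∈ span (MvPolynomial σ K) (s : Set A) := hs ▸ mem_top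
    induction hx using span_induction with
    | mem x hx =>
      refine ⟨0, ?_⟩
      rw [pow_zero, one_mul]
      exact le_sup_right (a := (1 : Submodule K A)) (subset_span hx)
    | zero => exact ⟨0, zero_mem _⟩
    | add x y _ _ hx hy =>
      obtain ⟨k, hk⟩ := hx
      obtain ⟨l, hl⟩ := hy
      exact ⟨k + l, add_mem (mul_le_mul_left (hP (k.le_add_right l)) _ hk)
        (mul_le_mul_left (hP (l.le_add_left k)) _ hl)⟩
    | smul p x _ hx =>
      obtain ⟨k, hk⟩ := exists_aeval_mem_degreeOneSpan_pow (g ∘ MvPolynomial.X) p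
      obtain ⟨l, hl⟩ := hx
      refine ⟨k + l, ?_⟩
      rw [pow_add, mul_assoc, Algebra.smul_def]
      exact mul_mem_mul (hg_eq p ▸ hk) hl
  obtain ⟨k, hk⟩ := exists_le_of_fg_of_monotone (hV.mul hM)
    (fun _ _ h => mul_le_mul_left (hP h) M) (fun x _ => hgen x)
  exact ((hasPolynomialGrowth_degreeOneSpan _).pow k).of_mul_le hV hM le_sup_left hk

end Finite

section AlgebraicRelation

variable {K A ι : Type*} [Field K] [CommRing A] [Algebra K A] [Fintype ι]

lemma prod_mem_pow_card {κ : Type*} {V : Submodule K A} (s : Finset κ) {a : κ → A}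
    (ha : ∀ i ∈ s, a i ∈ V) : ∏ i ∈ s, a i ∈ V ^ s.card := by
  classical
  induction s using Finset.induction_on with
  | empty =>
    rw [Finset.prod_empty, Finset.card_empty, pow_zero]
    exact Submodule.one_le.mp le_rfl
  | insert i s hi ih =>
    rw [Finset.prod_insert hi, Finset.card_insert_of_notMem hi, pow_succ']
    exact mul_mem_mul (ha i (s.mem_insert_self i))
      (ih fun j hj => ha j (Finset.mem_insert_of_mem hj))

/-- The monomial with exponents `e i ≤ N` in the fractions `f i / g i`, multiplied by the common
denominator `∏ i, g i ^ N`. -/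
def clearedMonomial (f g : ι → A) (N : ℕ) (e : ι → ℕ) : A :=
  ∏ i, f i ^ e i * g i ^ (N - e i)

lemma clearedMonomial_mem {V : Submodule K A} {f g : ι → A} (hf : ∀ i, f i ∈ V)
    (hg : ∀ i, g i ∈ V) {N : ℕ} {e : ι → ℕ} (he : ∀ i, e i ≤ N) :
    clearedMonomial f g N e ∈ V ^ (N * Fintype.card ι) := by
  rw [pow_mul]
  refine prod_mem_pow_card Finset.univ fun i _ => ?_
  have hmem : f i ^ e i * g i ^ (N - e i) ∈ V ^ (e i + (N - e i)) := by
    rw [pow_add]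
    exact mul_mem_mul (pow_mem_pow _ (hf i) _) (pow_mem_pow _ (hg i) _)
  rwa [Nat.add_sub_of_le (he i)] at hmem

lemma map_clearedMonomial (φ : A →ₐ[K] K) {f g : ι → A} (hφ : ∀ i, φ (g i) ≠ 0) {N : ℕ}
    {e : ι → ℕ} (he : ∀ i, e i ≤ N) :
    φ (clearedMonomial f g N e) = (∏ i, φ (g i) ^ N) * ∏ i, (φ (f i) / φ (g i)) ^ e i := by
  rw [clearedMonomial, map_prod, ← Finset.prod_mul_distrib]
  refine Finset.prod_congr rfl fun i _ => ?_
  rw [map_mul, map_pow, map_pow, pow_sub₀ _ (hφ i) (he i), div_pow]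
  field_simp

-- There are `(N + 1) ^ card ι` cleared monomials, and their span has dimension `O(N ^ d)`.
lemma HasPolynomialGrowth.exists_not_linearIndependent_clearedMonomial {V : Submodule K A}
    {d : ℕ} (hV : HasPolynomialGrowth V d) (hd : d < Fintype.card ι) {f g : ι → A}
    (hf : ∀ i, f i ∈ V) (hg : ∀ i, g i ∈ V) :
    ∃ N, ¬LinearIndependent K
      fun e : ι → Fin (N + 1) => clearedMonomial f g N fun i => (e i : ℕ) := by
  classical
  obtain ⟨hfg, c, hc⟩ := hV
  set m := Fintype.card ι
  set N := c * (m + 1) ^ d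
  refine ⟨N, fun hind => ?_⟩
  have hspan : span K (range fun e : ι → Fin (N + 1) => clearedMonomial f g N fun i => e i) ≤
      V ^ (N * m) :=
    span_le.mpr (range_subset_iff.mpr fun e => clearedMonomial_mem hf hg fun i => (e i).is_le)
  refine lt_irrefl ((N + 1) ^ m) ?_
  calc (N + 1) ^ m = Fintype.card (ι → Fin (N + 1)) := by rw [Fintype.card_fun, Fintype.card_fin]
    _ ≤ finrank K ↥(V ^ (N * m)) := by
      rw [← finrank_span_eq_card hind]
      exact finrank_le_of_le_of_fg hspan (hfg.pow _)
    _ ≤ c * (N * m + 1) ^ d := hc _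
    _ ≤ c * ((m + 1) * (N + 1)) ^ d := by gcongr; nlinarith
    _ = N * (N + 1) ^ d := by rw [mul_pow, mul_assoc]
    _ < (N + 1) * (N + 1) ^ d := by gcongr; omega
    _ = (N + 1) ^ (d + 1) := (pow_succ' _ _).symm
    _ ≤ (N + 1) ^ m := by gcongr <;> omega

lemma HasPolynomialGrowth.exists_algebraic_relation {V : Submodule K A} {d : ℕ}
    (hV : HasPolynomialGrowth V d) (hd : d < Fintype.card ι) {f g : ι → A}
    (hf : ∀ i, f i ∈ V) (hg : ∀ i, g i ∈ V) :
    ∃ P : MvPolynomial ι K, P ≠ 0 ∧ ∀ φ : A →ₐ[K] K, (∀ i, φ (g i) ≠ 0) →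
      MvPolynomial.eval (fun i => φ (f i) / φ (g i)) P = 0 := by
  classical
  obtain ⟨N, hN⟩ := hV.exists_not_linearIndependent_clearedMonomial hd hf hg
  obtain ⟨a, ha, e₀, he₀⟩ := Fintype.not_linearIndependent_iff.mp hN
  let exponent (e : ι → Fin (N + 1)) : ι →₀ ℕ := Finsupp.equivFunOnFinite.symm fun i => e i
  have hexponent : Function.Injective exponent := fun e e' h =>
    funext fun i => Fin.ext (DFunLike.congr_fun h i)
  refine ⟨∑ e, MvPolynomial.monomial (exponent e) (a e), fun h => he₀ ?_, fun φ hφ => ?_⟩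
  · have hcoeff := congrArg (MvPolynomial.coeff (exponent e₀)) h
    simpa [MvPolynomial.coeff_sum, MvPolynomial.coeff_monomial, hexponent.eq_iff] using hcoeff
  · refine (mul_eq_zero.mp ?_).resolve_left
      (Finset.prod_ne_zero_iff.mpr fun i (_ : i ∈ Finset.univ) => pow_ne_zero N (hφ i))
    calc (∏ i, φ (g i) ^ N) * MvPolynomial.eval (fun i => φ (f i) / φ (g i))
          (∑ e, MvPolynomial.monomial (exponent e) (a e))
        = ∑ e, a e * φ (clearedMonomial f g N fun i => e i) := by
          rw [map_sum, Finset.mul_sum]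
          refine Finset.sum_congr rfl fun e _ => ?_
          rw [map_clearedMonomial φ hφ fun i => (e i).is_le, MvPolynomial.eval_monomial,
            Finsupp.prod_fintype _ _ fun i => pow_zero _, mul_left_comm]
          rfl
      _ = φ (∑ e, a e • clearedMonomial f g N fun i => e i) := by
          simp only [map_sum, map_smul, smul_eq_mul]
      _ = 0 := by rw [ha, map_zero]

end AlgebraicRelation

/-! ### Affine Hilbert functions -/

section HilbertGrowth

variable {K σ : Type*} [Field K] {X Y : Set (σ → K)} {d : ℕ}

variable (K) in
/-- Composition with `f`, as a homomorphism between algebras of functions. -/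
def pullback {S T : Type*} (f : S → T) : (T → K) →ₐ[K] (S → K) :=
  AlgHom.pi fun s => Pi.evalAlgHom K (fun _ => K) (f s)

/-- The affine Hilbert function of `X` is `O(N ^ d)`: the functions on `X` given by polynomials of
degree at most `N` form a space of dimension `O(N ^ d)`. -/
def HasHilbertGrowth (X : Set (σ → K)) (d : ℕ) : Prop :=
  HasPolynomialGrowth (degreeOneSpan K fun (i : σ) (x : X) => x.1 i) d

namespace HasHilbertGrowth

lemma empty : HasHilbertGrowth (∅ : Set (σ → K)) d :=
  (HasPolynomialGrowth.one.mono_exponent d.zero_le).mono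
    (degreeOneSpan_le le_rfl fun i => by
      rw [Subsingleton.elim (fun x : (∅ : Set (σ → K)) => x.1 i) 0]
      exact zero_mem _)

lemma union (hX : HasHilbertGrowth X d) (hY : HasHilbertGrowth Y d) :
    HasHilbertGrowth (X ∪ Y) d := by
  let resX := pullback K (inclusion (subset_union_left (s := X) (t := Y)))
  let resY := pullback K (inclusion (subset_union_right (s := X) (t := Y)))
  have hinj : Function.Injective (resX.prod resY) := by
    intro f g hfg
    obtain ⟨hX, hY⟩ := Prod.ext_iff.mp hfg
    ext ⟨x, hx | hx⟩
    · exact congrFun hX ⟨x, hx⟩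
    · exact congrFun hY ⟨x, hx⟩
  refine HasPolynomialGrowth.of_map_map hinj ?_ ?_
  · rw [map_degreeOneSpan]
    exact hX
  · rw [map_degreeOneSpan]
    exact hY

lemma biUnion {ι : Type*} (s : Finset ι) {X : ι → Set (σ → K)}
    (hX : ∀ i ∈ s, HasHilbertGrowth (X i) d) : HasHilbertGrowth (⋃ i ∈ s, X i) d := by
  classical
  induction s using Finset.induction_on with
  | empty => simpa using empty
  | insert i s _ ih =>
    rw [Finset.set_biUnion_insert]
    exact (hX i (s.mem_insert_self i)).union (ih fun j hj => hX j (Finset.mem_insert_of_mem hj))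

lemma hasPolynomialGrowth_comp (hX : HasHilbertGrowth X d) {S : Type*} (f : S → X) :
    HasPolynomialGrowth (degreeOneSpan K fun i s => (f s).1 i) d := by
  have hmap := HasPolynomialGrowth.map hX (pullback K f)
  rwa [map_degreeOneSpan] at hmap

end HasHilbertGrowth

end HilbertGrowth

section OneDimensional

variable {K σ : Type*} [Field K]

lemma exists_isMaximal_comap_eq {R A : Type*} [CommRing R] [CommRing A] {g : R →+* A}
    (hg : g.IsIntegral) (hinj : Function.Injective g) (P : Ideal R) [P.IsMaximal] :
    ∃ Q : Ideal A, Q.IsMaximal ∧ Q.comap g = P := by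
  algebraize [g]
  refine Ideal.exists_ideal_over_maximal_of_isIntegral P ?_
  exact ((RingHom.injective_iff_ker_eq_bot g).mp hinj).trans_le bot_le

-- For `i ≠ j`, the points of the `j`-th axis lift to infinitely many maximal ideals containing
-- `g (X i)`.
lemma subsingleton_of_finite_isMaximal {A : Type*} [CommRing A] [Algebra K A] [Infinite K]
    {g : MvPolynomial σ K →ₐ[K] A} (hg : g.toRingHom.IsIntegral) (hinj : Function.Injective g)
    (hA : ∀ a : A, a ≠ 0 → {m : Ideal A | m.IsMaximal ∧ a ∈ m}.Finite) : Subsingleton σ := by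
  classical
  refine ⟨fun i j => by_contra fun hij => ?_⟩
  choose Q hQmax hQ using fun c : K => exists_isMaximal_comap_eq hg hinj
    (MvPolynomial.vanishingIdeal K {Pi.single j c})
  have hmem (c : K) (p : MvPolynomial σ K) :
      g p ∈ Q c ↔ MvPolynomial.eval (Pi.single j c) p = 0 := by
    refine Iff.trans ?_ (MvPolynomial.mem_vanishingIdeal_singleton_iff (Pi.single j c) p)
    rw [← hQ c]
    rfl
  have hQinj : Function.Injective Q := by
    intro c c' hcc'
    have h : g (MvPolynomial.X j - MvPolynomial.C c) ∈ Q c := (hmem _ _).mpr (by simp)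
    rw [hcc', hmem] at h
    simpa [sub_eq_zero, eq_comm] using h
  have hX : g (MvPolynomial.X i) ≠ 0 := (map_ne_zero_iff g hinj).mpr (MvPolynomial.X_ne_zero i)
  have hQmem (c : K) : Q c ∈ {m : Ideal A | m.IsMaximal ∧ g (MvPolynomial.X i) ∈ m} :=
    ⟨hQmax c, (hmem c _).mpr (by simp [hij])⟩
  exact infinite_of_injective_forall_mem hQinj hQmem (hA _ hX)

variable (X : Set (σ → K))

/-- The ring of polynomial functions on `X`. -/
def coordinateRing : Subalgebra K (X → K) :=
  (AlgHom.pi fun x : X => MvPolynomial.aeval (R := K) x.1).range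

/-- The restriction of polynomials to functions on `X`. -/
def toCoordinateRing : MvPolynomial σ K →ₐ[K] coordinateRing X :=
  (AlgHom.pi fun x : X => MvPolynomial.aeval (R := K) x.1).rangeRestrict

lemma toCoordinateRing_surjective : Function.Surjective (toCoordinateRing X) :=
  AlgHom.rangeRestrict_surjective _

variable {X}

lemma toCoordinateRing_apply (p : MvPolynomial σ K) (x : X) :
    (toCoordinateRing X p).1 x = MvPolynomial.eval x.1 p := rfl

lemma HasPolynomialGrowth.hasHilbertGrowth {d : ℕ}
    (h : HasPolynomialGrowth (degreeOneSpan K fun i => toCoordinateRing X (.X i)) d) :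
    HasHilbertGrowth X d := by
  have hcoord : ((coordinateRing X).val ∘ fun i => toCoordinateRing X (.X i)) =
      fun i (x : X) => x.1 i := by
    ext i x
    exact (toCoordinateRing_apply _ x).trans (MvPolynomial.eval_X i)
  have hmap := h.map (coordinateRing X).val
  rwa [map_degreeOneSpan, hcoord] at hmap

variable [Finite σ] [IsAlgClosed K] {I : Ideal (MvPolynomial σ K)}

lemma exists_mem_iff_of_isMaximal_coordinateRing
    {m : Ideal (coordinateRing (MvPolynomial.zeroLocus K I))} (hm : m.IsMaximal) :
    ∃ x, ∀ a, a ∈ m ↔ a.1 x = 0 := by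
  have hsurj := toCoordinateRing_surjective (MvPolynomial.zeroLocus K I)
  obtain ⟨x, hx⟩ := MvPolynomial.isMaximal_iff_eq_vanishingIdeal_singleton.mp
    (Ideal.comap_isMaximal_of_surjective _ hsurj (K := m))
  have hmem (p : MvPolynomial σ K) : toCoordinateRing _ p ∈ m ↔ MvPolynomial.eval x p = 0 := by
    rw [← Ideal.mem_comap, hx, MvPolynomial.mem_vanishingIdeal_singleton_iff]
    rfl
  have hxI : x ∈ MvPolynomial.zeroLocus K I := by
    intro p hp
    have hzero : toCoordinateRing (MvPolynomial.zeroLocus K I) p = 0 :=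
      Subtype.ext (funext fun y => y.2 p hp)
    exact (hmem p).mp (hzero ▸ m.zero_mem)
  refine ⟨⟨x, hxI⟩, fun a => ?_⟩
  obtain ⟨p, rfl⟩ := hsurj a
  exact hmem p

-- Noether normalization gives a finite injection of a polynomial ring in `s` variables into the
-- coordinate ring, and `s ≤ 1` as the nonzero elements of the latter lie in few maximal ideals.
lemma hasHilbertGrowth_one_of_finite_zeros
    (hI : ∀ p, (∃ x ∈ MvPolynomial.zeroLocus K I, MvPolynomial.eval x p ≠ 0) →
      {x ∈ MvPolynomial.zeroLocus K I | MvPolynomial.eval x p = 0}.Finite) :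
    HasHilbertGrowth (MvPolynomial.zeroLocus K I) 1 := by
  set X := MvPolynomial.zeroLocus K I
  obtain hempty | hne := X.eq_empty_or_nonempty
  · rw [hempty]
    exact .empty
  have : Nonempty X := hne.to_subtype
  have hfinite (a : coordinateRing X) (ha : a ≠ 0) :
      {m : Ideal (coordinateRing X) | m.IsMaximal ∧ a ∈ m}.Finite := by
    obtain ⟨p, rfl⟩ := toCoordinateRing_surjective X a
    have hp : ∃ x ∈ X, MvPolynomial.eval x p ≠ 0 := by
      by_contra! h
      exact ha (Subtype.ext (funext fun x => h x.1 x.2))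
    choose! point hpoint using
      fun (m : Ideal (coordinateRing X)) => exists_mem_iff_of_isMaximal_coordinateRing (m := m)
    refine Finite.of_finite_image (f := fun m => (point m).1) ((hI p hp).subset ?_) ?_
    · rintro _ ⟨m, ⟨hm, hpm⟩, rfl⟩
      exact ⟨(point m).2, (hpoint m hm _).mp hpm⟩
    · intro m hm m' hm' h
      ext a
      rw [hpoint m hm.1, hpoint m' hm'.1, Subtype.ext h]
  have : Algebra.FiniteType K (coordinateRing X) :=
    .of_surjective (toCoordinateRing X) (toCoordinateRing_surjective X)
  obtain ⟨s, g, hinj, hg⟩ := exists_finite_inj_algHom_of_fg K (coordinateRing X)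
  have : Infinite K := IsAlgClosed.instInfinite
  have hs : Fintype.card (Fin s) ≤ 1 := Fintype.card_le_one_iff_subsingleton.mpr
    (subsingleton_of_finite_isMaximal (RingHom.Finite.to_isIntegral hg) hinj hfinite)
  exact ((hasPolynomialGrowth_of_finite hg (degreeOneSpan_fg _)).mono_exponent hs).hasHilbertGrowth

end OneDimensional

section AlgebraicCurves

variable {k : ℕ} {X : Set (EuclideanSpace ℂ (Fin k))}

lemma IsAlgebraicSet.isClosed (hX : IsAlgebraicSet X) : IsClosed X := by
  obtain ⟨S, rfl⟩ := hX
  simp only [ofPred_forall]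
  exact isClosed_iInter fun p => isClosed_iInter fun _ =>
    isClosed_eq (p.continuous_eval.comp (by fun_prop)) continuous_const

lemma IsAlgebraicSet.sep_eval_eq_zero (hX : IsAlgebraicSet X) (p : MvPolynomial (Fin k) ℂ) :
    IsAlgebraicSet {x ∈ X | MvPolynomial.eval (fun i => x i) p = 0} := by
  classical
  obtain ⟨S, rfl⟩ := hX
  refine ⟨insert p S, ?_⟩
  ext x
  simp [and_comm]

lemma IsAlgebraicSet.exists_zeroLocus (hX : IsAlgebraicSet X) :
    ∃ I : Ideal (MvPolynomial (Fin k) ℂ), WithLp.toLp 2 ⁻¹' X = MvPolynomial.zeroLocus ℂ I := by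
  obtain ⟨S, rfl⟩ := hX
  exact ⟨Ideal.span S, (MvPolynomial.zeroLocus_span _).symm⟩

lemma IsIrreducibleAlgebraicCurve.hasHilbertGrowth (hX : IsIrreducibleAlgebraicCurve X) :
    HasHilbertGrowth (WithLp.toLp 2 ⁻¹' X) 1 := by
  obtain ⟨halg, -, hproper⟩ := hX
  obtain ⟨I, hI⟩ := halg.exists_zeroLocus
  rw [hI]
  refine hasHilbertGrowth_one_of_finite_zeros ?_
  rw [← hI]
  rintro p ⟨x, hx, hxp⟩
  have hfin := hproper _ (halg.sep_eval_eq_zero p)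
    ⟨sep_subset _ _, fun hsub => hxp (hsub hx).2⟩
  exact hfin.preimage (WithLp.toLp_injective 2).injOn

lemma IsAlgebraicCurve.isClosed (hX : IsAlgebraicCurve X) : IsClosed X := by
  obtain ⟨F, hF, rfl⟩ := hX
  exact F.finite_toSet.isClosed_biUnion fun C hC => (hF C hC).1.isClosed

lemma IsAlgebraicCurve.hasHilbertGrowth (hX : IsAlgebraicCurve X) :
    HasHilbertGrowth (WithLp.toLp 2 ⁻¹' X) 1 := by
  obtain ⟨F, hF, rfl⟩ := hX
  rw [preimage_iUnion₂]
  exact .biUnion F fun C hC => (hF C hC).hasHilbertGrowth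

end AlgebraicCurves

/-! ### Secants at infinity -/

section SecantRelation

variable {K σ : Type*} [Field K]

lemma exists_eq_X_none_pow_mul {P : MvPolynomial (Option σ) K} (hP : P ≠ 0) :
    ∃ (m : ℕ) (Q : MvPolynomial (Option σ) K) (R : MvPolynomial σ K), P = .X none ^ m * Q ∧
      R ≠ 0 ∧ ∀ v, MvPolynomial.eval (fun j => j.elim 0 v) Q = MvPolynomial.eval v R := by
  obtain ⟨m, Q, hQ, hPQ⟩ := WfDvdMonoid.max_power_factor hP
    (MvPolynomial.X_prime (i := none)).irreducible
  refine ⟨m, Q, (MvPolynomial.optionEquivLeft K σ Q).coeff 0, hPQ, ?_, fun v => ?_⟩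
  · rwa [← map_dvd_iff (MvPolynomial.optionEquivLeft K σ), MvPolynomial.optionEquivLeft_X_none,
      Polynomial.X_dvd_iff] at hQ
  · rw [MvPolynomial.optionEquivLeft_elim_eval, ← Polynomial.coeff_zero_eq_eval_zero,
      Polynomial.coeff_map]

variable [Fintype σ] {X : Set (σ → K)} {d : ℕ}

lemma HasHilbertGrowth.exists_relation (hX : HasHilbertGrowth X d)
    (hd : 2 * d < Fintype.card σ) (i : σ) :
    ∃ P : MvPolynomial (Option σ) K, P ≠ 0 ∧ ∀ x ∈ X, ∀ y ∈ X, ∀ t : K, x i ≠ 0 →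
      MvPolynomial.eval (fun j => j.elim (x i)⁻¹ (t • (x - y))) P = 0 := by
  let a (j : σ) (z : X × X × K) : K := z.1.1 j
  let b (j : σ) (z : X × X × K) : K := z.2.1.1 j
  let t (_ : Unit) (z : X × X × K) : K := z.2.2
  have ha : HasPolynomialGrowth (degreeOneSpan K a) d :=
    hX.hasPolynomialGrowth_comp fun z : X × X × K => z.1
  have hb : HasPolynomialGrowth (degreeOneSpan K b) d :=
    hX.hasPolynomialGrowth_comp fun z : X × X × K => z.2.1
  have hV := (ha.mul hb).mul (hasPolynomialGrowth_degreeOneSpan t)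
  have hA : 1 ≤ degreeOneSpan K a := one_le_degreeOneSpan a
  have hB : 1 ≤ degreeOneSpan K b := one_le_degreeOneSpan b
  have hT : 1 ≤ degreeOneSpan K t := one_le_degreeOneSpan t
  have hone := Submodule.one_le.mp (one_le_mul (one_le_mul hA hB) hT)
  have hcoord (j : σ) : a j ∈ degreeOneSpan K a * degreeOneSpan K b :=
    le_mul_of_one_le_right' hB (mem_degreeOneSpan a j)
  have hdiff (j : σ) : a j - b j ∈ degreeOneSpan K a * degreeOneSpan K b :=
    sub_mem (hcoord j) (le_mul_of_one_le_left' hA (mem_degreeOneSpan b j))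
  obtain ⟨P, hP, hrel⟩ := hV.exists_algebraic_relation (ι := Option σ)
    (f := fun j => j.elim 1 fun j => (a j - b j) * t ()) (g := fun j => j.elim (a i) 1)
    (by rw [Fintype.card_option, Fintype.card_unit]; omega)
    (Option.forall.mpr ⟨hone, fun j => mul_mem_mul (hdiff j) (mem_degreeOneSpan t ())⟩)
    (Option.forall.mpr ⟨le_mul_of_one_le_right' hT (hcoord i), fun _ => hone⟩)
  refine ⟨P, hP, fun x hx y hy c hxi => ?_⟩
  let z : X × X × K := (⟨x, hx⟩, ⟨y, hy⟩, c)
  rw [← hrel (Pi.evalAlgHom K _ z) (Option.forall.mpr ⟨hxi, fun _ => one_ne_zero⟩)]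
  congr 2
  ext (_ | j)
  · simp [a, z]
  · simp [a, b, t, z, mul_comm]

-- The variable `none` stands for `1 / x i`, so that `R` is the restriction of `Q` to `x i = ∞`.
lemma HasHilbertGrowth.exists_relation_at_infinity (hX : HasHilbertGrowth X d)
    (hd : 2 * d < Fintype.card σ) (i : σ) :
    ∃ (Q : MvPolynomial (Option σ) K) (R : MvPolynomial σ K), R ≠ 0 ∧
      (∀ v, MvPolynomial.eval (fun j => j.elim 0 v) Q = MvPolynomial.eval v R) ∧
      ∀ x ∈ X, ∀ y ∈ X, ∀ t : K, x i ≠ 0 →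
        MvPolynomial.eval (fun j => j.elim (x i)⁻¹ (t • (x - y))) Q = 0 := by
  obtain ⟨P, hP, hrel⟩ := hX.exists_relation hd i
  obtain ⟨m, Q, R, rfl, hR, hQR⟩ := exists_eq_X_none_pow_mul hP
  refine ⟨Q, R, hR, hQR, fun x hx y hy t hxi => ?_⟩
  have h := hrel x hx y hy t hxi
  rw [map_mul, map_pow, MvPolynomial.eval_X] at h
  exact (mul_eq_zero.mp h).resolve_left (pow_ne_zero m (inv_ne_zero hxi))

end SecantRelation

section Secants

variable {𝕜 E F : Type*} [NontriviallyNormedField 𝕜] [NormedAddCommGroup E] [NormedSpace 𝕜 E]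
  [NormedAddCommGroup F] [NormedSpace 𝕜 F]

variable (𝕜) in
/-- Some neighbourhood of `v` meets no secant direction `t • (x - y)` of `X` with `x` near
infinity. -/
def AvoidsSecantsAtInfinity (X : Set E) (v : E) : Prop :=
  ∃ U ∈ 𝓝 v, ∀ᶠ x in cobounded E, x ∈ X → ∀ y ∈ X, ∀ t : 𝕜, t • (x - y) ∉ U

lemma AvoidsSecantsAtInfinity.preimage {X : Set F} {v : E} (f : E →L[𝕜] F)
    (hf : Tendsto f (cobounded E) (cobounded F)) (h : AvoidsSecantsAtInfinity 𝕜 X (f v)) :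
    AvoidsSecantsAtInfinity 𝕜 (f ⁻¹' X) v := by
  obtain ⟨U, hU, h⟩ := h
  refine ⟨f ⁻¹' U, f.continuous.continuousAt hU, (hf.eventually h).mono fun x hx hxX y hy t => ?_⟩
  rw [mem_preimage, map_smul, map_sub]
  exact hx hxX (f y) hy t

variable {σ : Type*} [Fintype σ] {X : Set (σ → 𝕜)} {d : ℕ}

lemma HasHilbertGrowth.exists_eventually_secant_notMem (hX : HasHilbertGrowth X d)
    (hd : 2 * d < Fintype.card σ) (i : σ) :
    ∃ R : MvPolynomial σ 𝕜, R ≠ 0 ∧ ∀ v, MvPolynomial.eval v R ≠ 0 → ∃ U ∈ 𝓝 v,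
      ∀ᶠ x in comap (Function.eval i) (cobounded 𝕜), x ∈ X → ∀ y ∈ X, ∀ t : 𝕜,
        t • (x - y) ∉ U := by
  obtain ⟨Q, R, hR, hQR, hrel⟩ := hX.exists_relation_at_infinity hd i
  refine ⟨R, hR, fun v hv => ?_⟩
  have hcont : Continuous fun p : 𝕜 × (σ → 𝕜) =>
      MvPolynomial.eval (fun j => j.elim p.1 p.2) Q := by
    refine Q.continuous_eval.comp (continuous_pi ?_)
    rintro (_ | j)
    exacts [continuous_fst, (continuous_apply j).comp continuous_snd]
  have hne : ∀ᶠ p in 𝓝 (0 : 𝕜) ×ˢ 𝓝 v, MvPolynomial.eval (fun j => j.elim p.1 p.2) Q ≠ 0 := by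
    rw [← nhds_prod_eq]
    exact hcont.continuousAt.eventually_ne ((hQR v).trans_ne hv)
  obtain ⟨small, hsmall, near, hnear, hne⟩ := eventually_prod_iff.mp hne
  refine ⟨{w | near w}, hnear, ?_⟩
  have hlarge : ∀ᶠ x : σ → 𝕜 in comap (Function.eval i) (cobounded 𝕜), small (x i)⁻¹ ∧ x i ≠ 0 :=
    Filter.Eventually.comap
      ((tendsto_inv₀_cobounded.eventually hsmall).and (eventually_ne_cobounded 0)) _
  filter_upwards [hlarge] with x hx hxX y hy t ht
  exact hne hx.1 ht (hrel x hxX y hy t hx.2)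

lemma HasHilbertGrowth.exists_avoidsSecantsAtInfinity (hX : HasHilbertGrowth X d)
    (hd : 2 * d < Fintype.card σ) : ∃ v ≠ 0, AvoidsSecantsAtInfinity 𝕜 X v := by
  choose R hR hsecant using hX.exists_eventually_secant_notMem hd
  obtain ⟨i⟩ : Nonempty σ := Fintype.card_pos_iff.mp (by omega)
  have hprod : MvPolynomial.X i * ∏ j, R j ≠ 0 :=
    mul_ne_zero (MvPolynomial.X_ne_zero i) (Finset.prod_ne_zero_iff.mpr fun j _ => hR j)
  obtain ⟨v, hv⟩ : ∃ v, MvPolynomial.eval v (MvPolynomial.X i * ∏ j, R j) ≠ 0 := by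
    by_contra! h
    exact hprod (MvPolynomial.funext fun v => (h v).trans (map_zero _).symm)
  rw [map_mul, MvPolynomial.eval_X, map_prod, mul_ne_zero_iff, Finset.prod_ne_zero_iff] at hv
  choose U hU hUX using fun j => hsecant j v (hv.2 j (Finset.mem_univ j))
  refine ⟨v, ne_of_apply_ne (· i) hv.1, ⋂ j, U j, iInter_mem.mpr hU, ?_⟩
  rw [cobounded_pi, Filter.coprodᵢ, eventually_iSup]
  exact fun j => (hUX j).mono fun x hx hxX y hy t ht => hx hxX y hy t (mem_iInter.mp ht j)

end Secants

/-! ### Linear projections -/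

section Projection

lemma exists_surjective_linearMap_ker_eq {K V W : Type*} [Field K] [AddCommGroup V] [Module K V]
    [AddCommGroup W] [Module K W] [FiniteDimensional K V] [FiniteDimensional K W]
    {S : Submodule K V} (hS : finrank K W + finrank K S = finrank K V) :
    ∃ π : V →ₗ[K] W, Function.Surjective π ∧ LinearMap.ker π = S := by
  have hquot : finrank K (V ⧸ S) = finrank K W := by
    have := S.finrank_quotient_add_finrank
    omega
  let e : (V ⧸ S) ≃ₗ[K] W := LinearEquiv.ofFinrankEq _ _ hquot
  exact ⟨e.toLinearMap ∘ₗ S.mkQ, e.surjective.comp S.mkQ_surjective,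
    by rw [LinearEquiv.ker_comp, ker_mkQ]⟩

lemma isCompact_inter_preimage_of_eventually_dist_le {α β : Type*} [PseudoMetricSpace α]
    [ProperSpace α] [MetricSpace β] {X : Set α} (hX : IsClosed X) {f : α → β}
    (hf : Continuous f) {C : ℝ} (hC : 0 ≤ C)
    (h : ∀ᶠ x in cobounded α, x ∈ X → ∀ y ∈ X, dist x y ≤ C * dist (f x) (f y))
    {L : Set β} (hL : IsCompact L) : IsCompact (X ∩ f ⁻¹' L) := by
  obtain hempty | ⟨y, hyX, hyL⟩ := (X ∩ f ⁻¹' L).eq_empty_or_nonempty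
  · rw [hempty]
    exact isCompact_empty
  refine isCompact_of_isClosed_isBounded (hX.inter (hL.isClosed.preimage hf)) ?_
  have hfar : ∀ᶠ x in cobounded α, x ∉ closedBall y (C * diam L) :=
    isBounded_closedBall
  refine isBounded_def.mpr ?_
  filter_upwards [h, hfar] with x hx hxfar ⟨hxX, hxL⟩
  refine hxfar ((hx hxX y hyX).trans ?_)
  gcongr
  exact dist_le_diam_of_mem hL.isBounded hxL hyL

lemma exists_pos_forall_of_eventually_cobounded {α F : Type*} [PseudoMetricSpace α]
    [SeminormedAddCommGroup F] {p : α → Prop} (hp : ∀ᶠ x in cobounded α, p x) {f : α → F}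
    {C : NNReal} (hf : LipschitzWith C f) : ∃ r > 0, ∀ x, r ≤ ‖f x‖ → p x := by
  have hbdd : IsBounded (f '' {x | p x}ᶜ) := hf.isBounded_image (isBounded_compl_iff.mpr hp)
  obtain ⟨r, hr, hlt⟩ := hbdd.exists_pos_norm_lt
  exact ⟨r, hr, fun x hx => by_contra fun hxp => (hlt _ ⟨x, hxp, rfl⟩).not_ge hx⟩

variable {𝕜 E F : Type*} [NontriviallyNormedField 𝕜] [NormedAddCommGroup E] [NormedSpace 𝕜 E]
  [CompleteSpace E] [NormedAddCommGroup F] [NormedSpace 𝕜 F] [CompleteSpace F]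
  {π : E →L[𝕜] F} {v : E}

lemma exists_norm_le_mul_norm_map_of_smul_notMem (hπ : Function.Surjective π)
    (hker : LinearMap.ker π.toLinearMap ≤ 𝕜 ∙ v) {U : Set E} (hU : U ∈ 𝓝 v) :
    ∃ C ≥ 0, ∀ z, (∀ t : 𝕜, t • z ∉ U) → ‖z‖ ≤ C * ‖π z‖ := by
  obtain ⟨ε, hε, hball⟩ := Metric.mem_nhds_iff.mp hU
  obtain ⟨C, hC, hpreimage⟩ := π.exists_preimage_norm_le hπ
  refine ⟨(1 + ‖v‖ / ε) * C, by positivity, fun z hz => ?_⟩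
  obtain ⟨x, hx, hxz⟩ := hpreimage (π z)
  obtain ⟨s, hs⟩ : ∃ s : 𝕜, s • v = z - x :=
    mem_span_singleton.mp (hker (by simp [hx]))
  have hsx : ‖s‖ * ε ≤ ‖x‖ := by
    by_contra! hlt
    have hs0 : s ≠ 0 := by
      rintro rfl
      simp [(norm_nonneg x).not_gt] at hlt
    refine hz s⁻¹ (hball ?_)
    have hsz : s⁻¹ • z - v = s⁻¹ • x := by
      rw [eq_add_of_sub_eq' hs.symm, smul_add, inv_smul_smul₀ hs0, add_sub_cancel_right]
    rw [mem_ball_iff_norm, hsz, norm_smul, norm_inv, inv_mul_lt_iff₀ (norm_pos_iff.mpr hs0)]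
    exact hlt
  calc ‖z‖ = ‖x + s • v‖ := by rw [hs, add_sub_cancel]
    _ ≤ ‖x‖ + ‖s‖ * ‖v‖ := (norm_add_le _ _).trans_eq (by rw [norm_smul])
    _ ≤ ‖x‖ + ‖x‖ / ε * ‖v‖ := by gcongr; exact (le_div_iff₀ hε).mpr hsx
    _ = (1 + ‖v‖ / ε) * ‖x‖ := by ring
    _ ≤ (1 + ‖v‖ / ε) * (C * ‖π z‖) := by gcongr
    _ = (1 + ‖v‖ / ε) * C * ‖π z‖ := by ring

lemma AvoidsSecantsAtInfinity.exists_eventually_norm_sub_le {X : Set E}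
    (hv : AvoidsSecantsAtInfinity 𝕜 X v) (hπ : Function.Surjective π)
    (hker : LinearMap.ker π.toLinearMap ≤ 𝕜 ∙ v) :
    ∃ C ≥ 0, ∀ᶠ x in cobounded E, x ∈ X → ∀ y ∈ X, ‖x - y‖ ≤ C * ‖π x - π y‖ := by
  obtain ⟨U, hU, hsecant⟩ := hv
  obtain ⟨C, hC, hnorm⟩ := exists_norm_le_mul_norm_map_of_smul_notMem hπ hker hU
  refine ⟨C, hC, hsecant.mono fun x hx hxX y hy => ?_⟩
  rw [← map_sub]
  exact hnorm _ (hx hxX y hy)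

end Projection

section Main

variable {𝕜 : Type*} [RCLike 𝕜] {n d : ℕ} {X : Set (EuclideanSpace 𝕜 (Fin n))}

lemma HasHilbertGrowth.exists_avoidsSecantsAtInfinity_euclidean
    (hX : HasHilbertGrowth (WithLp.toLp 2 ⁻¹' X) d) (hd : 2 * d < n) :
    ∃ v ≠ 0, AvoidsSecantsAtInfinity 𝕜 X v := by
  obtain ⟨v, hv0, hv⟩ := hX.exists_avoidsSecantsAtInfinity (by rwa [Fintype.card_fin])
  let e := EuclideanSpace.equiv (Fin n) 𝕜
  refine ⟨e.symm v, e.symm.map_ne_zero_iff.mpr hv0, ?_⟩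
  refine hv.preimage (v := e.symm v) (e : EuclideanSpace 𝕜 (Fin n) →L[𝕜] Fin n → 𝕜) ?_
  exact e.antilipschitz.tendsto_cobounded

theorem stmt_1_general (hX : IsClosed X) (hgrowth : HasHilbertGrowth (WithLp.toLp 2 ⁻¹' X) d)
    (hd : 2 * d < n) :
    ∃ (r : ℝ) (π : EuclideanSpace 𝕜 (Fin n) →ₗ[𝕜] EuclideanSpace 𝕜 (Fin (n - 1))),
      0 < r ∧ Function.Surjective π ∧
      (∀ L : Set (EuclideanSpace 𝕜 (Fin (n - 1))), IsCompact L → IsCompact (X ∩ π ⁻¹' L)) ∧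
      (∃ C : ℝ, 1 ≤ C ∧ ∀ x ∈ X \ π ⁻¹' ball 0 r, ∀ y ∈ X \ π ⁻¹' ball 0 r,
        C⁻¹ * ‖x - y‖ ≤ ‖π x - π y‖ ∧ ‖π x - π y‖ ≤ C * ‖x - y‖) ∧
      MapsTo π (X \ π ⁻¹' ball 0 r) (ball 0 r)ᶜ := by
  obtain ⟨v, hv0, hv⟩ := hgrowth.exists_avoidsSecantsAtInfinity_euclidean hd
  obtain ⟨π, hπ, hker⟩ := exists_surjective_linearMap_ker_eq (S := 𝕜 ∙ v)
    (W := EuclideanSpace 𝕜 (Fin (n - 1)))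
    (by simp only [finrank_span_singleton hv0, finrank_euclideanSpace_fin]; omega)
  let πL := LinearMap.toContinuousLinearMap π
  obtain ⟨C, hC, hfar⟩ := hv.exists_eventually_norm_sub_le (π := πL) hπ hker.le
  obtain ⟨r, hr, hlarge⟩ := exists_pos_forall_of_eventually_cobounded hfar πL.lipschitz
  refine ⟨r, π, hr, hπ, fun L hL => ?_, ⟨max 1 (max C ‖πL‖), le_max_left _ _, ?_⟩,
    fun x hx => hx.2⟩
  · exact isCompact_inter_preimage_of_eventually_dist_le hX πL.continuous hC
      (by simpa only [dist_eq_norm] using hfar) hL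
  · rintro x ⟨hxX, hx⟩ y ⟨hyX, -⟩
    have hxr : r ≤ ‖π x‖ := by simpa using hx
    constructor
    · rw [inv_mul_le_iff₀ (by positivity)]
      calc ‖x - y‖ ≤ C * ‖π x - π y‖ := hlarge x hxr hxX y hyX
        _ ≤ max 1 (max C ‖πL‖) * ‖π x - π y‖ := by gcongr; simp
    · calc ‖π x - π y‖ ≤ ‖πL‖ * ‖x - y‖ := by rw [← map_sub]; exact πL.le_opNorm _
        _ ≤ max 1 (max C ‖πL‖) * ‖x - y‖ := by gcongr; simp

end Main

/-- For `n ≥ 3` and an algebraic curve `X ⊂ ℂⁿ`, there exist `r > 0` and a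
surjective linear map `π : ℂⁿ → ℂⁿ⁻¹` whose restriction to `X` is proper and which is
bi-Lipschitz on `X \ π⁻¹(B(0,r))`, mapping it into `ℂⁿ⁻¹ \ B(0,r)`. -/
theorem stmt_1 (n : ℕ) (hn : 3 ≤ n) (X : Set (EuclideanSpace ℂ (Fin n)))
    (hX : IsAlgebraicCurve X) :
    ∃ (r : ℝ) (π : EuclideanSpace ℂ (Fin n) →ₗ[ℂ] EuclideanSpace ℂ (Fin (n - 1))),
      0 < r ∧ Function.Surjective π ∧
      (∀ K : Set (EuclideanSpace ℂ (Fin (n - 1))), IsCompact K → IsCompact (X ∩ ⇑π ⁻¹' K)) ∧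
      (∃ C : ℝ, 1 ≤ C ∧
        ∀ x ∈ X \ ⇑π ⁻¹' Metric.ball 0 r, ∀ y ∈ X \ ⇑π ⁻¹' Metric.ball 0 r,
          C⁻¹ * ‖x - y‖ ≤ ‖π x - π y‖ ∧ ‖π x - π y‖ ≤ C * ‖x - y‖) ∧
      Set.MapsTo (⇑π) (X \ ⇑π ⁻¹' Metric.ball 0 r) ((Metric.ball 0 r)ᶜ) := by
  exact stmt_1_general hX.isClosed hX.hasHilbertGrowth (by omega)

end
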